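/- Every compact framed submanifold (N, ν) of codimension p of a boundaryless smooth manifold M is a Pontryagin manifold: there exists a smooth map f : M → S^p and a regular value y ∈ S^p with a positively oriented basis w of T_y S^p such that f^{-1}(y) = N and f^*w = ν. -/

import Mathlib

/-!
# Statement 16: Every compact framed submanifold is a Pontryagin manifold
-/

open scoped RealInnerProductSpace Topology Topology.Homotopy unitInterval
open Function Set Metric

noncomputable section

namespace Paper


variable {E : Type*} [NormedAddCommGroup E] [InnerProductSpace ℝ E]

/-- The tangent space of a subset `M ⊆ E` at `x`: the span of all velocity vectors at
`x` of curves lying in `M`. -/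
def SubTangent {E' : Type*} [NormedAddCommGroup E'] [NormedSpace ℝ E']
    (M : Set E') (x : E') : Submodule ℝ E' :=
  Submodule.span ℝ {v | ∃ γ : ℝ → E', (∀ t, γ t ∈ M) ∧ γ 0 = x ∧ HasDerivAt γ v 0}

/-- Smoothness of a map on a subset: local extendability to smooth maps on open sets. -/
def SmoothOnSet {E' G : Type*} [NormedAddCommGroup E'] [NormedSpace ℝ E']
    [NormedAddCommGroup G] [NormedSpace ℝ G] (f : E' → G) (N : Set E') : Prop :=
  ∀ x ∈ N, ∃ (U : Set E') (g : E' → G), IsOpen U ∧ x ∈ U ∧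
    ContDiffOn ℝ (⊤ : ℕ∞) g U ∧ Set.EqOn f g (N ∩ U)

/-- `M` is a smooth `m`-dimensional submanifold (without boundary) of `E'`:
locally a regular level set of a smooth submersion. -/
def IsSubmanifold {E' : Type*} [NormedAddCommGroup E'] [NormedSpace ℝ E']
    (M : Set E') (m : ℕ) : Prop :=
  ∀ x ∈ M, ∃ (U : Set E')
      (Φ : E' → EuclideanSpace ℝ (Fin (Module.finrank ℝ E' - m))),
    IsOpen U ∧ x ∈ U ∧ ContDiffOn ℝ (⊤ : ℕ∞) Φ U ∧
    (∀ y ∈ U, Function.Surjective (fderiv ℝ Φ y)) ∧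
    U ∩ M = U ∩ Φ ⁻¹' {0}

/-- `L` is a derivative of `f` at `x ∈ M` along `M` (the derivative of a local smooth
extension of `f|_M`). -/
def HasDerivOn {E' G : Type*} [NormedAddCommGroup E'] [NormedSpace ℝ E']
    [NormedAddCommGroup G] [NormedSpace ℝ G]
    (f : E' → G) (M : Set E') (x : E') (L : E' →L[ℝ] G) : Prop :=
  ∃ g : E' → G, (∀ᶠ y in nhds x, y ∈ M → f y = g y) ∧ f x = g x ∧ HasFDerivAt g L x

/-- A framing of a submanifold `N ⊆ M` of codimension `p`: a smooth field of
bases of the orthogonal complement of `T_xN` inside `T_xM`. -/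
structure IsFraming (M : Set E) (N : Set E) (p : ℕ) (ν : Fin p → E → E) : Prop where
  smooth : ∀ i, SmoothOnSet (ν i) N
  mem_tangent : ∀ i, ∀ x ∈ N, ν i x ∈ SubTangent M x
  orth : ∀ i, ∀ x ∈ N, ∀ v ∈ SubTangent N x, ⟪ν i x, v⟫ = 0
  indep : ∀ x ∈ N, LinearIndependent ℝ fun i => ν i x
  spans : ∀ x ∈ N,
    SubTangent N x ⊔ Submodule.span ℝ (Set.range fun i => ν i x) = SubTangent M x

/-- `(N, ν)` is a compact framed submanifold of `M` of codimension `p`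
(`m` denotes the dimension of `M`). -/
structure IsFramedSubmanifold (M : Set E) (m : ℕ) (N : Set E) (p : ℕ)
    (ν : Fin p → E → E) : Prop where
  subset : N ⊆ M
  compact : IsCompact N
  submanifold : IsSubmanifold N (m - p)
  framing : IsFraming M N p ν

/-- The unit `p`-sphere in `ℝ^{p+1}`. -/
def sphereSet (p : ℕ) : Set (EuclideanSpace ℝ (Fin (p + 1))) :=
  Metric.sphere 0 1

/-- `w` is a positively oriented basis of the tangent space `T_y S^p`. -/
def PosOrientedTangentBasis (p : ℕ) (y : EuclideanSpace ℝ (Fin (p + 1)))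
    (w : Fin p → EuclideanSpace ℝ (Fin (p + 1))) : Prop :=
  (∀ i, ⟪y, w i⟫ = 0) ∧
  0 < Matrix.det (Matrix.of fun i j => (Fin.cons y w : Fin (p+1) → _) i j)

/-- `y` is a regular value of `f|_M`. -/
def IsRegularValue (p : ℕ) (f : E → EuclideanSpace ℝ (Fin (p + 1))) (M : Set E)
    (y : EuclideanSpace ℝ (Fin (p + 1))) : Prop :=
  ∀ x ∈ M, f x = y → ∃ L, HasDerivOn f M x L ∧
    SubTangent (sphereSet p) y ≤ Submodule.map (L : E →ₗ[ℝ] _) (SubTangent M x)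

/-- `(N, ν)` is the Pontryagin manifold `(f⁻¹(y), f^*w)` of `f`. -/
structure IsPontryaginManifold (m p : ℕ) (f : E → EuclideanSpace ℝ (Fin (p + 1)))
    (M : Set E) (y : EuclideanSpace ℝ (Fin (p + 1)))
    (w : Fin p → EuclideanSpace ℝ (Fin (p + 1)))
    (N : Set E) (ν : Fin p → E → E) : Prop where
  framed : IsFramedSubmanifold M m N p ν
  mem_sphere : y ∈ sphereSet p
  basis : PosOrientedTangentBasis p y w
  regular : IsRegularValue p f M y
  preimage : N = {x ∈ M | f x = y}
  pullback : ∀ x ∈ N, ∃ L, HasDerivOn f M x L ∧ ∀ i, L (ν i x) = w i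

/-- Smooth homotopy of maps on `M` with values in `target`. -/
def SmoothHomotopicOn {G : Type*} [NormedAddCommGroup G] [NormedSpace ℝ G]
    (M : Set E) (f g : E → G) (target : Set G) : Prop :=
  ∃ H : E × ℝ → G, SmoothOnSet H (M ×ˢ (univ : Set ℝ)) ∧
    (∀ x ∈ M, ∀ t : ℝ, H (x, t) ∈ target) ∧
    (∀ x ∈ M, H (x, 0) = f x) ∧ (∀ x ∈ M, H (x, 1) = g x)

/-- The product inner product on `E × ℝ`. -/
def prodInner (u v : E × ℝ) : ℝ := ⟪u.1, v.1⟫ + u.2 * v.2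

/-- Framed cobordism of framed submanifolds `(N, ν)`, `(N', ν')` of `M` within
`M × [0,1]`, following Milnor/Pontryagin. -/
def FramedCobordant (M : Set E) (m p : ℕ) (N : Set E) (ν : Fin p → E → E)
    (N' : Set E) (ν' : Fin p → E → E) : Prop :=
  ∃ (Xc : Set (E × ℝ)) (u : Fin p → (E × ℝ) → (E × ℝ)) (ε : ℝ),
    0 < ε ∧ ε < 1 / 2 ∧
    IsCompact Xc ∧ Xc ⊆ M ×ˢ Icc (0 : ℝ) 1 ∧
    Xc ∩ (univ ×ˢ Iio ε) = N ×ˢ Ico (0 : ℝ) ε ∧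
    Xc ∩ (univ ×ˢ Ioi (1 - ε)) = N' ×ˢ Ioc (1 - ε) 1 ∧
    IsSubmanifold (Xc ∩ (univ ×ˢ Ioo (0 : ℝ) 1)) (m - p + 1) ∧
    (∀ i, SmoothOnSet (u i) Xc) ∧
    (∀ z ∈ Xc ∩ (univ ×ˢ Ioo (0 : ℝ) 1),
      (∀ i, u i z ∈ SubTangent (M ×ˢ (univ : Set ℝ)) z) ∧
      (∀ i, ∀ v ∈ SubTangent (Xc ∩ (univ ×ˢ Ioo (0 : ℝ) 1)) z, prodInner (u i z) v = 0) ∧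
      LinearIndependent ℝ (fun i => u i z) ∧
      SubTangent (Xc ∩ (univ ×ˢ Ioo (0 : ℝ) 1)) z ⊔
          Submodule.span ℝ (Set.range fun i => u i z)
        = SubTangent (M ×ˢ (univ : Set ℝ)) z) ∧
    (∀ x t, (x, t) ∈ Xc → t < ε → ∀ i, u i (x, t) = (ν i x, 0)) ∧
    (∀ x t, (x, t) ∈ Xc → 1 - ε < t → ∀ i, u i (x, t) = (ν' i x, 0))


theorem subTangent_fderiv_eq_zero {G : Type*} [NormedAddCommGroup G] [NormedSpace ℝ G]
    {M U : Set E} {x : E} {Φ : E → G} (hU : IsOpen U) (hx : x ∈ U)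
    (hΦ : DifferentiableAt ℝ Φ x) (h0 : ∀ y ∈ U, y ∈ M → Φ y = 0)
    {v : E} (hv : v ∈ SubTangent M x) : fderiv ℝ Φ x v = 0 := by
  have hle : SubTangent M x ≤ LinearMap.ker (fderiv ℝ Φ x : E →ₗ[ℝ] G) := by
    refine Submodule.span_le.2 ?_
    rintro v ⟨γ, hγ, hγ0, hd⟩
    have h1 : HasDerivAt (fun t => Φ (γ t)) (fderiv ℝ Φ x v) 0 := by
      have h2 : HasFDerivAt Φ (fderiv ℝ Φ x) (γ 0) := by rw [hγ0]; exact hΦ.hasFDerivAt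
      exact h2.comp_hasDerivAt (0 : ℝ) hd
    have h3 : (fun t => Φ (γ t)) =ᶠ[𝓝 0] fun _ => (0 : G) := by
      have : ∀ᶠ t in 𝓝 (0 : ℝ), γ t ∈ U :=
        hd.continuousAt.eventually_mem (by rw [hγ0]; exact hU.mem_nhds hx)
      filter_upwards [this] with t ht using h0 _ ht (hγ t)
    have h4 : HasDerivAt (fun t => Φ (γ t)) 0 0 :=
      (hasDerivAt_const (0 : ℝ) (0 : G)).congr_of_eventuallyEq h3
    simpa using h1.unique h4
  simpa using hle hv

theorem ker_le_subTangent [CompleteSpace E] {G : Type*} [NormedAddCommGroup G] [NormedSpace ℝ G]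
    [FiniteDimensional ℝ G] {M U : Set E} {x : E} {Φ : E → G} {Φ' : E →L[ℝ] G}
    (hU : IsOpen U) (hx : x ∈ U) (hxM : x ∈ M)
    (hΦ : HasStrictFDerivAt Φ Φ' x) (hs : Function.Surjective Φ')
    (hM : U ∩ M = U ∩ Φ ⁻¹' {0}) {v : E} (hv : Φ' v = 0) : v ∈ SubTangent M x := by
  classical
  have hr : Φ'.range = ⊤ := LinearMap.range_eq_top.2 hs
  have hΦx : Φ x = 0 := by
    have : x ∈ U ∩ Φ ⁻¹' {0} := hM ▸ ⟨hx, hxM⟩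
    simpa using this.2
  let k : Φ'.ker := ⟨v, hv⟩
  let c : ℝ → E := fun t => hΦ.implicitFunction Φ Φ' hr (Φ x) (t • k)
  have hc0 : c 0 = x := by simp [c]
  have hcd : HasDerivAt c v 0 := by
    have h1 := (hΦ.to_implicitFunction hr).hasFDerivAt
    have h2 : HasDerivAt (fun t : ℝ => t • k) k 0 := by
      simpa using (hasDerivAt_id (0 : ℝ)).smul_const k
    have h1' : HasFDerivAt (hΦ.implicitFunction Φ Φ' hr (Φ x)) Φ'.ker.subtypeL ((0 : ℝ) • k) := by
      simpa using h1
    simpa using! h1'.comp_hasDerivAt (0 : ℝ) h2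
  have hcm : ∀ᶠ t in 𝓝 (0 : ℝ), c t ∈ M := by
    have h1 : ∀ᶠ t in 𝓝 (0 : ℝ), c t ∈ U :=
      hcd.continuousAt.eventually_mem (by rw [hc0]; exact hU.mem_nhds hx)
    have h2 : Filter.Tendsto (fun t : ℝ => (Φ x, t • k)) (𝓝 0) (𝓝 (Φ x, 0)) := by
      have : Continuous (fun t : ℝ => (Φ x, t • k)) := by fun_prop
      simpa using this.tendsto 0
    have h3 := h2.eventually (hΦ.map_implicitFunction_eq hr)
    filter_upwards [h1, h3] with t h4 h5
    have : c t ∈ U ∩ Φ ⁻¹' {0} := ⟨h4, by simpa [c, hΦx] using h5⟩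
    rw [← hM] at this
    exact this.2
  refine Submodule.subset_span ⟨fun t => if c t ∈ M then c t else x, ?_, ?_, ?_⟩
  · intro t
    dsimp only
    split_ifs with h
    · exact h
    · exact hxM
  · simp [hc0]
  · refine hcd.congr_of_eventuallyEq ?_
    filter_upwards [hcm] with t ht
    simp [ht]

theorem exists_local_defining [FiniteDimensional ℝ E] {M N : Set E} {k p : ℕ}
    (hN : IsSubmanifold N k) {ν : Fin p → E → E} (hν : IsFraming M N p ν) {x₀ : E} (hx₀ : x₀ ∈ N) :
    ∃ (W : Set E) (g : E → (Fin p → ℝ)), IsOpen W ∧ x₀ ∈ W ∧ ContDiffOn ℝ (⊤ : ℕ∞) g W ∧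
      ∀ x ∈ N, x ∈ W → g x = 0 ∧ ∀ i, fderiv ℝ g x (ν i x) = Pi.single i 1 := by
  classical
  have : CompleteSpace E := FiniteDimensional.complete ℝ E
  obtain ⟨U, Φ, hU, hxU, hΦ, hsurj, hNU⟩ := hN x₀ hx₀
  have hν' := fun i => hν.smooth i x₀ hx₀
  choose Ui νt hUi hxUi hνt heq using hν'
  let V : Set E := U ∩ ⋂ i, Ui i
  have hV : IsOpen V := hU.inter (isOpen_iInter_of_finite hUi)
  have hxV : x₀ ∈ V := ⟨hxU, mem_iInter.2 hxUi⟩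
  let B : E → ((Fin p → ℝ) →L[ℝ] EuclideanSpace ℝ (Fin (Module.finrank ℝ E - k))) := fun x =>
    ∑ i, (ContinuousLinearMap.proj (R := ℝ) (φ := fun _ : Fin p => ℝ) i).smulRight
      (fderiv ℝ Φ x (νt i x))
  have hBap : ∀ x c, B x c = ∑ i, c i • fderiv ℝ Φ x (νt i x) := by
    intro x c
    simp [B]
  have hdΦ : ContDiffOn ℝ (⊤ : ℕ∞) (fderiv ℝ Φ) V :=
    (hΦ.fderiv_of_isOpen hU (by simp)).mono inter_subset_left
  have hB : ContDiffOn ℝ (⊤ : ℕ∞) B V := by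
    refine ContDiffOn.sum fun i _ => ?_
    have h1 : ContDiffOn ℝ (⊤ : ℕ∞) (fun x => fderiv ℝ Φ x (νt i x)) V :=
      hdΦ.clm_apply ((hνt i).mono fun y hy => mem_iInter.1 hy.2 i)
    exact contDiffOn_const.smulRight h1
  have hstrict : HasStrictFDerivAt Φ (fderiv ℝ Φ x₀) x₀ :=
    (hΦ.contDiffAt (hU.mem_nhds hxU)).hasStrictFDerivAt (by simp)
  have hinj : LinearMap.ker (B x₀ : (Fin p → ℝ) →ₗ[ℝ]
      EuclideanSpace ℝ (Fin (Module.finrank ℝ E - k))) = ⊥ := by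
    refine LinearMap.ker_eq_bot'.2 fun c hc => ?_
    have hc' : fderiv ℝ Φ x₀ (∑ i, c i • ν i x₀) = 0 := by
      have h2 : ∀ i, νt i x₀ = ν i x₀ := fun i => (heq i ⟨hx₀, hxUi i⟩).symm
      have h1 := hBap x₀ c
      simp only [h2] at h1
      rw [map_sum]
      simp only [map_smul]
      rw [← h1]; exact hc
    have ht := ker_le_subTangent hU hxU hx₀ hstrict (hsurj _ hxU) hNU hc'
    have h0 : (∑ i, c i • ν i x₀) = 0 := by
      have : ⟪∑ i, c i • ν i x₀, ∑ i, c i • ν i x₀⟫ = 0 := by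
        conv_lhs => rw [sum_inner]
        refine Finset.sum_eq_zero fun i _ => ?_
        rw [real_inner_smul_left, hν.orth i x₀ hx₀ _ ht, mul_zero]
      exact inner_self_eq_zero.1 this
    funext i
    exact Fintype.linearIndependent_iff.1 (hν.indep x₀ hx₀) c h0 i
  obtain ⟨C₀, hC₀⟩ := LinearMap.exists_leftInverse_of_injective _ hinj
  let C := LinearMap.toContinuousLinearMap C₀
  let T : E → ((Fin p → ℝ) →L[ℝ] (Fin p → ℝ)) := fun x => C ∘L B x
  have hT : ContDiffOn ℝ (⊤ : ℕ∞) T V := contDiffOn_const.clm_comp hB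
  have hT0 : T x₀ = 1 := by
    ext1 c
    exact LinearMap.congr_fun hC₀ c
  let W : Set E := V ∩ T ⁻¹' {a | IsUnit a}
  have hW : IsOpen W := hT.continuousOn.isOpen_inter_preimage hV Units.isOpen
  have hA : ContDiffOn ℝ (⊤ : ℕ∞) (fun x => Ring.inverse (T x)) W := by
    intro x hx
    obtain ⟨u, hu⟩ := hx.2
    have h1 : ContDiffAt ℝ (⊤ : ℕ∞) Ring.inverse (T x) := by
      rw [← hu]; exact contDiffAt_ringInverse ℝ u
    exact h1.comp_contDiffWithinAt x ((hT x hx.1).mono inter_subset_left)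
  have hCΦ : ContDiffOn ℝ (⊤ : ℕ∞) (fun x => C (Φ x)) W :=
    C.contDiff.comp_contDiffOn (hΦ.mono fun y hy => hy.1.1)
  refine ⟨W, fun x => Ring.inverse (T x) (C (Φ x)), hW, ⟨hxV, by simp [hT0]⟩,
    hA.clm_apply hCΦ, fun x hxN hxW => ?_⟩
  have hΦx : Φ x = 0 := by
    have : x ∈ U ∩ Φ ⁻¹' {0} := hNU ▸ ⟨hxW.1.1, hxN⟩
    simpa using this.2
  refine ⟨by simp [hΦx], fun i => ?_⟩
  have hAd : HasFDerivAt (fun x => Ring.inverse (T x)) _ x :=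
    ((hA.contDiffAt (hW.mem_nhds hxW)).differentiableAt (by simp)).hasFDerivAt
  have hΦd : HasFDerivAt Φ (fderiv ℝ Φ x) x :=
    ((hΦ.contDiffAt (hU.mem_nhds hxW.1.1)).differentiableAt (by simp)).hasFDerivAt
  have hCd : HasFDerivAt (fun x => C (Φ x)) (C ∘L fderiv ℝ Φ x) x := C.hasFDerivAt.comp x hΦd
  rw [(hAd.clm_apply hCd).fderiv]
  have hTe : C (fderiv ℝ Φ x (ν i x)) = T x (Pi.single i 1) := by
    have h2 : νt i x = ν i x := (heq i ⟨hxN, mem_iInter.1 hxW.1.2 i⟩).symm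
    change _ = C (B x (Pi.single i 1))
    rw [hBap, Finset.sum_eq_single i]
    · simp [h2]
    · intro j _ hj
      simp [Pi.single_eq_of_ne hj]
    · simp
  have hinv : Ring.inverse (T x) * T x = 1 := Ring.inverse_mul_cancel _ hxW.2
  simp only [hΦx, map_zero, _root_.add_apply, ContinuousLinearMap.comp_apply, hTe]
  have := DFunLike.congr_fun hinv (Pi.single i 1)
  simpa using this

open scoped Manifold ContDiff in
theorem exists_global_defining [FiniteDimensional ℝ E] {M N : Set E} {k p : ℕ}
    (hN : IsSubmanifold N k) (hc : IsCompact N) {ν : Fin p → E → E} (hν : IsFraming M N p ν) :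
    ∃ F : E → (Fin p → ℝ), ContDiff ℝ (⊤ : ℕ∞) F ∧
      ∀ x ∈ N, F x = 0 ∧ ∀ i, fderiv ℝ F x (ν i x) = Pi.single i 1 := by
  classical
  have hloc := fun x : N => exists_local_defining hN hν x.2
  choose W g hW hxW hg hgN using hloc
  obtain ⟨t, ht⟩ := hc.elim_finite_subcover W hW fun x hx => mem_iUnion.2 ⟨⟨x, hx⟩, hxW _⟩
  have hcov : N ⊆ ⋃ a : t, W a.1 := by
    intro x hx
    obtain ⟨a, ha, hxa⟩ := mem_iUnion₂.1 (ht hx)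
    exact mem_iUnion.2 ⟨⟨a, ha⟩, hxa⟩
  obtain ⟨ρ, hρ⟩ := SmoothPartitionOfUnity.exists_isSubordinate 𝓘(ℝ, E) hc.isClosed
    (fun a : t => W a.1) (fun a => hW a.1) hcov
  have hρd : ∀ a, ContDiff ℝ (⊤ : ℕ∞) (ρ a : E → ℝ) := fun a => (ρ a).contMDiff.contDiff
  have hs : ∀ a : t, ContDiff ℝ (⊤ : ℕ∞) (fun x => ρ a x • g a.1 x) := by
    intro a
    refine ContMDiff.contDiff (ρ.contMDiff_smul (n := (⊤ : ℕ∞)) fun x hx => ?_)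
    exact ((hg a.1).contDiffAt ((hW a.1).mem_nhds (hρ a hx))).contMDiffAt
  have hds : ∀ a : t, ∀ x ∈ N, ∀ i,
      fderiv ℝ (fun x => ρ a x • g a.1 x) x (ν i x) = ρ a x • (Pi.single i 1 : Fin p → ℝ) := by
    intro a x hx i
    by_cases hxa : x ∈ W a.1
    · have h1 : HasFDerivAt (ρ a : E → ℝ) _ x :=
        ((hρd a).contDiffAt.differentiableAt (by simp)).hasFDerivAt
      have h2 : HasFDerivAt (g a.1) _ x := (((hg a.1).contDiffAt
        ((hW a.1).mem_nhds hxa)).differentiableAt (by simp)).hasFDerivAt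
      have h3 := (h1.smul h2).fderiv
      have h4 := hgN a.1 x hx hxa
      have h5 : fderiv ℝ (fun x => ρ a x • g a.1 x) x (ν i x) =
          fderiv ℝ ((ρ a : E → ℝ) • g a.1) x (ν i x) := rfl
      rw [h5, h3]
      simp [h4.1, h4.2 i]
    · have hn : x ∉ tsupport (ρ a) := fun h => hxa (hρ a h)
      have h1 : (ρ a : E → ℝ) =ᶠ[𝓝 x] 0 := notMem_tsupport_iff_eventuallyEq.1 hn
      have h2 : (fun x => ρ a x • g a.1 x) =ᶠ[𝓝 x] fun _ => 0 := by
        filter_upwards [h1] with y hy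
        simp [hy]
      rw [h2.fderiv_eq, h1.eq_of_nhds]
      simp
  refine ⟨fun x => ∑ a : t, ρ a x • g a.1 x, ContDiff.sum fun a _ => hs a, fun x hx => ⟨?_, ?_⟩⟩
  · refine Finset.sum_eq_zero fun a _ => ?_
    by_cases hxa : x ∈ W a.1
    · rw [(hgN a.1 x hx hxa).1, smul_zero]
    · have hn : x ∉ tsupport (ρ a) := fun h => hxa (hρ a h)
      rw [image_eq_zero_of_notMem_tsupport hn, zero_smul]
  · intro i
    have h1 : fderiv ℝ (fun x => ∑ a : t, ρ a x • g a.1 x) x =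
        ∑ a : t, fderiv ℝ (fun x => ρ a x • g a.1 x) x :=
      fderiv_fun_sum fun a _ => (hs a).contDiffAt.differentiableAt (by simp)
    rw [h1, _root_.sum_apply]
    simp only [hds _ x hx i]
    rw [← Finset.sum_smul]
    have h2 := ρ.sum_eq_one hx
    rw [finsum_eq_sum_of_fintype] at h2
    rw [h2, one_smul]

theorem eventually_mem_of_zero [FiniteDimensional ℝ E] {M N : Set E} {m k p : ℕ}
    (hM : IsSubmanifold M m) (hN : IsSubmanifold N k) (hNM : N ⊆ M)
    {ν : Fin p → E → E} (hν : IsFraming M N p ν)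
    {F : E → (Fin p → ℝ)} (hF : ContDiff ℝ (⊤ : ℕ∞) F)
    (hFN : ∀ x ∈ N, F x = 0 ∧ ∀ i, fderiv ℝ F x (ν i x) = Pi.single i 1)
    {x₀ : E} (hx₀ : x₀ ∈ N) :
    ∀ᶠ z in 𝓝 x₀, z ∈ M → F z = 0 → z ∈ N := by
  classical
  have : CompleteSpace E := FiniteDimensional.complete ℝ E
  obtain ⟨U, Φ, hU, hxU, hΦ, hΦs, hNU⟩ := hN x₀ hx₀
  obtain ⟨U', Ψ, hU', hxU', hΨ, hΨs, hMU⟩ := hM x₀ (hNM hx₀)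
  have hΦd : HasStrictFDerivAt Φ (fderiv ℝ Φ x₀) x₀ :=
    (hΦ.contDiffAt (hU.mem_nhds hxU)).hasStrictFDerivAt (by simp)
  have hΨd : HasStrictFDerivAt Ψ (fderiv ℝ Ψ x₀) x₀ :=
    (hΨ.contDiffAt (hU'.mem_nhds hxU')).hasStrictFDerivAt (by simp)
  have hFd : HasStrictFDerivAt F (fderiv ℝ F x₀) x₀ :=
    hF.contDiffAt.hasStrictFDerivAt (by simp)
  let K : Submodule ℝ E := (fderiv ℝ Φ x₀).ker
  let Q : E →L[ℝ] K := K.orthogonalProjectionOnto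
  have hQK : ∀ u : K, Q u = u := fun u => by simp [Q]
  -- the map `(Φ, Q)` is locally open
  have hopen : Filter.map (fun z => (Φ z, Q z)) (𝓝 x₀) = 𝓝 (Φ x₀, Q x₀) := by
    refine (hΦd.prodMk Q.hasStrictFDerivAt).map_nhds_eq_of_surj ?_
    refine LinearMap.range_eq_top.2 ?_
    rintro ⟨a, b⟩
    obtain ⟨u, hu⟩ := hΦs x₀ hxU a
    refine ⟨u + ((b - Q u : K) : E), Prod.ext ?_ ?_⟩
    · have : fderiv ℝ Φ x₀ ((b - Q u : K) : E) = 0 := (b - Q u : K).2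
      change fderiv ℝ Φ x₀ (u + ((b - Q u : K) : E)) = a
      rw [map_add, this, hu, add_zero]
    · change Q (u + ((b - Q u : K) : E)) = b
      rw [map_add, hQK]
      abel
  -- the map `(Ψ, F, Q)` is locally injective
  have hHd := hΨd.prodMk (hFd.prodMk Q.hasStrictFDerivAt)
  set L := (fderiv ℝ Ψ x₀).prod ((fderiv ℝ F x₀).prod Q) with hL
  have hker : LinearMap.ker (L : E →ₗ[ℝ]
      EuclideanSpace ℝ (Fin (Module.finrank ℝ E - m)) × (Fin p → ℝ) × K) = ⊥ := by
    refine LinearMap.ker_eq_bot'.2 fun v hv => ?_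
    have hv1 : fderiv ℝ Ψ x₀ v = 0 := congrArg Prod.fst hv
    have hv2 : fderiv ℝ F x₀ v = 0 := congrArg (fun q => q.2.1) hv
    have hv3 : Q v = 0 := congrArg (fun q => q.2.2) hv
    have hvT := ker_le_subTangent hU' hxU' (hNM hx₀) hΨd (hΨs _ hxU') hMU hv1
    rw [← hν.spans x₀ hx₀, Submodule.mem_sup] at hvT
    obtain ⟨u, hu, s, hs, rfl⟩ := hvT
    obtain ⟨c, rfl⟩ := (Submodule.mem_span_range_iff_exists_fun ℝ).1 hs
    have hFu : fderiv ℝ F x₀ u = 0 :=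
      subTangent_fderiv_eq_zero isOpen_univ (mem_univ _) hFd.differentiableAt
        (fun y _ hy => (hFN y hy).1) hu
    have hc : c = 0 := by
      rw [map_add, hFu, zero_add, map_sum] at hv2
      simp only [map_smul, (hFN x₀ hx₀).2] at hv2
      funext j
      have := congrFun hv2 j
      simpa [Finset.sum_apply, Pi.single_apply] using this
    have huK : u ∈ K := subTangent_fderiv_eq_zero hU hxU hΦd.differentiableAt
      (fun y hyU hy => by
        have : y ∈ U ∩ Φ ⁻¹' {0} := hNU ▸ ⟨hyU, hy⟩
        simpa using this.2) hu
    have h0 : Q u = 0 := by simpa [hc] using hv3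
    have h1 : u = 0 := by
      have := hQK ⟨u, huK⟩
      rw [h0] at this
      simpa using (congrArg Subtype.val this).symm
    simp [hc, h1]
  obtain ⟨κ, hκ, hanti⟩ := LinearMap.exists_antilipschitzWith _ hker
  have hlo := hHd.isLittleO.def (c := (2 * (κ : ℝ))⁻¹) (by positivity)
  have hinj : ∀ᶠ q : E × E in 𝓝 (x₀, x₀),
      (Ψ q.1, F q.1, Q q.1) = (Ψ q.2, F q.2, Q q.2) → q.1 = q.2 := by
    filter_upwards [hlo] with q hq heq
    have h1 : ‖q.1 - q.2‖ ≤ κ * ‖L (q.1 - q.2)‖ := by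
      have := hanti.le_mul_dist q.1 q.2
      rw [dist_eq_norm, dist_eq_norm, ← map_sub] at this
      exact this
    rw [heq, sub_self, zero_sub, norm_neg] at hq
    have h2 : ‖q.1 - q.2‖ ≤ κ * ((2 * (κ : ℝ))⁻¹ * ‖q.1 - q.2‖) :=
      h1.trans (by gcongr)
    have hκ' : (0 : ℝ) < κ := hκ
    have h3 : κ * ((2 * (κ : ℝ))⁻¹ * ‖q.1 - q.2‖) = ‖q.1 - q.2‖ / 2 := by
      field_simp
    rw [h3] at h2
    have h4 : ‖q.1 - q.2‖ = 0 := by linarith [norm_nonneg (q.1 - q.2)]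
    exact sub_eq_zero.1 (norm_eq_zero.1 h4)
  rw [nhds_prod_eq] at hinj
  obtain ⟨P, hP, P', hP', hPP⟩ := Filter.eventually_prod_iff.1 hinj
  have hΦ0 : Φ x₀ = 0 := by
    have : x₀ ∈ U ∩ Φ ⁻¹' {0} := hNU ▸ ⟨hxU, hx₀⟩
    simpa using this.2
  have himg : (fun z => (Φ z, Q z)) '' ({z | P' z} ∩ (U ∩ U')) ∈ 𝓝 (Φ x₀, Q x₀) := by
    rw [← hopen]
    exact Filter.image_mem_map (Filter.inter_mem hP' (Filter.inter_mem (hU.mem_nhds hxU)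
      (hU'.mem_nhds hxU')))
  have hcont : ∀ᶠ z in 𝓝 x₀, ((0 : EuclideanSpace ℝ (Fin (Module.finrank ℝ E - k))), Q z) ∈
      (fun z => (Φ z, Q z)) '' ({z | P' z} ∩ (U ∩ U')) := by
    have h1 : Continuous fun z =>
        ((0 : EuclideanSpace ℝ (Fin (Module.finrank ℝ E - k))), Q z) := by fun_prop
    rw [hΦ0] at himg
    exact h1.continuousAt.eventually_mem himg
  filter_upwards [hcont, hP, hU'.mem_nhds hxU'] with z hz hPz hzU' hzM hFz
  obtain ⟨z', ⟨hPz', hz'U, hz'U'⟩, hz'⟩ := hz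
  have h1 : Φ z' = 0 := congrArg Prod.fst hz'
  have h2 : Q z' = Q z := congrArg Prod.snd hz'
  have hz'N : z' ∈ N := by
    have : z' ∈ U ∩ Φ ⁻¹' {0} := ⟨hz'U, h1⟩
    rw [← hNU] at this
    exact this.2
  have hΨ0 : ∀ y ∈ U', y ∈ M → Ψ y = 0 := by
    intro y hy hyM
    have : y ∈ U' ∩ Ψ ⁻¹' {0} := hMU ▸ ⟨hy, hyM⟩
    simpa using this.2
  have h3 : z = z' := by
    refine hPP hPz hPz' ?_
    simp [hΨ0 z hzU' hzM, hΨ0 z' hz'U' (hNM hz'N), hFz, (hFN z' hz'N).1, h2]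
  rw [h3]; exact hz'N

/-- The base point of the sphere. -/
def basePt (p : ℕ) : EuclideanSpace ℝ (Fin (p + 1)) := EuclideanSpace.single 0 1

/-- The standard frame at the base point. -/
def stdFrame (p : ℕ) (i : Fin p) : EuclideanSpace ℝ (Fin (p + 1)) := EuclideanSpace.single i.succ 1

/-- The inclusion of the tangent space at the base point. -/
def tanIncl (p : ℕ) : (Fin p → ℝ) →L[ℝ] EuclideanSpace ℝ (Fin (p + 1)) :=
  ∑ i, (ContinuousLinearMap.proj (R := ℝ) (φ := fun _ : Fin p => ℝ) i).smulRight (stdFrame p i)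

theorem tanIncl_apply (p : ℕ) (c : Fin p → ℝ) : tanIncl p c = ∑ i, c i • stdFrame p i := by
  simp [tanIncl]

theorem tanIncl_zero (p : ℕ) (c : Fin p → ℝ) : tanIncl p c 0 = 0 := by
  simp [tanIncl_apply, stdFrame, Pi.single_apply, (Fin.succ_ne_zero _).symm]

theorem tanIncl_succ (p : ℕ) (c : Fin p → ℝ) (i : Fin p) : tanIncl p c i.succ = c i := by
  simp [tanIncl_apply, stdFrame, Pi.single_apply]

theorem inner_basePt (p : ℕ) (v : EuclideanSpace ℝ (Fin (p + 1))) : ⟪basePt p, v⟫ = v 0 := by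
  simp [basePt, EuclideanSpace.inner_single_left]

theorem tanIncl_single (p : ℕ) (i : Fin p) : tanIncl p (Pi.single i 1) = stdFrame p i := by
  rw [tanIncl_apply, Finset.sum_eq_single i]
  · simp
  · intro j _ hj
    simp [Pi.single_eq_of_ne hj]
  · simp

theorem norm_basePt (p : ℕ) : ‖basePt p‖ = 1 := by simp [basePt]

theorem posOriented_std (p : ℕ) : PosOrientedTangentBasis p (basePt p) (stdFrame p) := by
  refine ⟨fun i => ?_, ?_⟩
  · rw [inner_basePt]
    simp [stdFrame, Pi.single_apply, (Fin.succ_ne_zero _).symm]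
  · have : (Matrix.of fun i j =>
        (Fin.cons (basePt p) (stdFrame p) : Fin (p + 1) → EuclideanSpace ℝ (Fin (p + 1))) i j)
        = (1 : Matrix (Fin (p + 1)) (Fin (p + 1)) ℝ) := by
      ext i j
      refine Fin.cases ?_ (fun i => ?_) i
      · simp [basePt, Matrix.one_apply, Pi.single_apply, eq_comm]
      · simp [stdFrame, Matrix.one_apply, Pi.single_apply, eq_comm]
    rw [this, Matrix.det_one]
    exact one_pos

theorem basePt_mem (p : ℕ) : basePt p ∈ sphereSet p := by
  simp [sphereSet, norm_basePt]

theorem sphere_tangent (p : ℕ) {v : EuclideanSpace ℝ (Fin (p + 1))}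
    (hv : v ∈ SubTangent (sphereSet p) (basePt p)) : v 0 = 0 := by
  have h1 : HasFDerivAt (fun z : EuclideanSpace ℝ (Fin (p + 1)) => ‖z‖ ^ 2 - 1)
      (2 • innerSL ℝ (basePt p)) (basePt p) :=
    (hasStrictFDerivAt_norm_sq (basePt p)).hasFDerivAt.sub_const 1
  have h2 := subTangent_fderiv_eq_zero isOpen_univ (mem_univ _) h1.differentiableAt
    (fun z _ hz => by
      have : ‖z‖ = 1 := by simpa [sphereSet] using hz
      simp [this]) hv
  rw [h1.fderiv] at h2
  have h3 : 2 * ⟪basePt p, v⟫ = 0 := by simpa using h2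
  rw [inner_basePt] at h3
  linarith

theorem finiteDimensional_of_nonempty {N : Set E} {k : ℕ} (hN : IsSubmanifold N k)
    (hc : IsCompact N) (hne : N.Nonempty) : FiniteDimensional ℝ E := by
  by_contra hfd
  obtain ⟨x, hx⟩ := hne
  obtain ⟨U, Φ, hU, hxU, -, -, hNU⟩ := hN x hx
  have h0 : Module.finrank ℝ E - k = 0 := by
    rw [Module.finrank_of_not_finite hfd, Nat.zero_sub]
  have hsub : U ⊆ N := by
    intro y hy
    have : y ∈ U ∩ Φ ⁻¹' {0} := by
      refine ⟨hy, ?_⟩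
      have : IsEmpty (Fin (Module.finrank ℝ E - k)) := by rw [h0]; infer_instance
      exact Subsingleton.elim _ _
    rw [← hNU] at this
    exact this.2
  obtain ⟨r, hr, hrU⟩ := Metric.nhds_basis_closedBall.mem_iff.1 (hU.mem_nhds hxU)
  exact hfd (FiniteDimensional.of_isCompact_closedBall ℝ hr
    (hc.of_isClosed_subset Metric.isClosed_closedBall (hrU.trans hsub)))

theorem hasFDerivAt_normalize {G : Type*} [NormedAddCommGroup G] [InnerProductSpace ℝ G]
    {h : E → G} {L : E →L[ℝ] G} {x : E} (hh : HasFDerivAt h L x) (h1 : ‖h x‖ = 1)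
    (hL : ∀ v, ⟪h x, L v⟫ = 0) : HasFDerivAt (fun z => ‖h z‖⁻¹ • h z) L x := by
  have h2 : HasFDerivAt (fun z => ‖h z‖ ^ 2) (0 : E →L[ℝ] ℝ) x := by
    convert! hh.norm_sq using 1
    ext v
    simp [hL v]
  have h3 : HasFDerivAt (fun z => ‖h z‖⁻¹) (0 : E →L[ℝ] ℝ) x := by
    have h4 : DifferentiableAt ℝ (fun t : ℝ => (Real.sqrt t)⁻¹) (‖h x‖ ^ 2) := by
      rw [h1]
      exact (Real.hasDerivAt_sqrt (by norm_num)).differentiableAt.inv (by norm_num)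
    have h5 := h4.hasDerivAt.comp_hasFDerivAt x h2
    rw [smul_zero] at h5
    convert! h5 using 1
    funext z
    simp [Real.sqrt_sq (norm_nonneg _)]
  have h6 := h3.smul hh
  convert! h6 using 1
  ext v
  simp [h1]

open scoped Manifold ContDiff in
theorem pontryagin_finite [FiniteDimensional ℝ E] (m p : ℕ) (M : Set E)
    (hM : IsSubmanifold M m) (N : Set E) (ν : Fin p → E → E)
    (hN : IsFramedSubmanifold M m N p ν) :
    ∃ f : E → EuclideanSpace ℝ (Fin (p + 1)),
      SmoothOnSet f M ∧ (∀ x ∈ M, f x ∈ sphereSet p) ∧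
      ∃ y w, IsPontryaginManifold m p f M y w N ν := by
  obtain ⟨F, hF, hFN⟩ := exists_global_defining hN.submanifold hN.compact hN.framing
  let V : Set E := {z | z ∈ M → F z = 0 → z ∈ N}
  have hNV : N ⊆ interior V := fun x hx => mem_interior_iff_mem_nhds.2
    (eventually_mem_of_zero hM hN.submanifold hN.subset hN.framing hF hFN hx)
  obtain ⟨χ, hχ1, hχ0, -⟩ := exists_contMDiffMap_one_nhds_of_subset_interior
    (n := (⊤ : ℕ∞)) 𝓘(ℝ, E) hN.compact.isClosed hNV
  have hχd : ContDiff ℝ (⊤ : ℕ∞) (χ : E → ℝ) := χ.contMDiff.contDiff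
  have hχN : ∀ x ∈ N, χ x = 1 := fun x hx => hχ1.self_of_nhdsSet x hx
  have hkey : ∀ x ∈ M, χ x ≠ 0 → (∀ i, χ x * F x i = 0) → x ∈ N := by
    intro x hx h0 h1
    have hxV : x ∈ V := by
      by_contra h
      exact h0 (hχ0 x h)
    refine hxV hx (funext fun i => ?_)
    exact (mul_eq_zero.1 (h1 i)).resolve_left h0
  let h : E → EuclideanSpace ℝ (Fin (p + 1)) := fun x =>
    (2 * χ x - 1) • basePt p + tanIncl p (χ x • F x)
  have hh0 : ∀ x, h x 0 = 2 * χ x - 1 := by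
    intro x
    simp [h, tanIncl_zero, basePt]
  have hhs : ∀ x i, h x (Fin.succ i) = χ x * F x i := by
    intro x i
    have : basePt p i.succ = 0 := by simp [basePt]
    simp [h, tanIncl_succ, this]
  have hhd : ContDiff ℝ (⊤ : ℕ∞) h := by
    have h1 := (tanIncl p).contDiff (n := (⊤ : ℕ∞))
    exact (((contDiff_const.mul hχd).sub contDiff_const).smul contDiff_const).add
      (h1.comp (hχd.smul hF))
  have hne : ∀ x ∈ M, h x ≠ 0 := by
    intro x hx hz
    have h1 : 2 * χ x - 1 = 0 := by rw [← hh0, hz]; rfl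
    have h2 : ∀ i, χ x * F x i = 0 := fun i => by rw [← hhs, hz]; rfl
    have h3 := hχN x (hkey x hx (by intro h; rw [h] at h1; norm_num at h1) h2)
    rw [h3] at h1
    norm_num at h1
  have hhN : ∀ x ∈ N, h x = basePt p := by
    intro x hx
    simp [h, hχN x hx, (hFN x hx).1]
    norm_num
  have hder : ∀ x ∈ N, HasDerivOn (fun z => ‖h z‖⁻¹ • h z) M x (tanIncl p ∘L fderiv ℝ F x) := by
    intro x hx
    refine ⟨_, Filter.Eventually.of_forall fun _ _ => rfl, rfl, ?_⟩
    have hloc : h =ᶠ[𝓝 x] fun z => basePt p + tanIncl p (F z) := by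
      have h1 : ∀ᶠ z in 𝓝 x, χ z = 1 := hχ1.filter_mono (nhds_le_nhdsSet hx)
      filter_upwards [h1] with z hz
      simp [h, hz]
      norm_num
    have hFd : HasFDerivAt F (fderiv ℝ F x) x :=
      (hF.contDiffAt.differentiableAt (by simp)).hasFDerivAt
    have hd : HasFDerivAt h (tanIncl p ∘L fderiv ℝ F x) x :=
      (((tanIncl p).hasFDerivAt.comp x hFd).const_add (basePt p)).congr_of_eventuallyEq hloc
    refine hasFDerivAt_normalize hd (by rw [hhN x hx, norm_basePt]) fun v => ?_
    rw [hhN x hx, inner_basePt]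
    exact tanIncl_zero _ _
  have hpre : N = {x ∈ M | ‖h x‖⁻¹ • h x = basePt p} := by
    refine Subset.antisymm (fun x hx => ⟨hN.subset hx, ?_⟩) ?_
    · rw [hhN x hx, norm_basePt]; simp
    · rintro x ⟨hx, hxe⟩
      have hpos : 0 < ‖h x‖⁻¹ := inv_pos.2 (norm_pos_iff.2 (hne x hx))
      have h1 : ‖h x‖⁻¹ * (2 * χ x - 1) = 1 := by
        have := congrArg (fun q : EuclideanSpace ℝ (Fin (p + 1)) => q 0) hxe
        simpa [hh0, basePt] using this
      have h2 : ∀ i, χ x * F x i = 0 := by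
        intro i
        have := congrArg (fun q : EuclideanSpace ℝ (Fin (p + 1)) => q i.succ) hxe
        have h3 : ‖h x‖⁻¹ * (χ x * F x i) = 0 := by
          rw [← hhs]
          have h4 : basePt p i.succ = 0 := by simp [basePt]
          rw [← h4]
          exact this
        exact (mul_eq_zero.1 h3).resolve_left hpos.ne'
      refine hkey x hx (fun h0 => ?_) h2
      rw [h0] at h1
      linarith
  have hframe : ∀ x ∈ N, ∀ i, (tanIncl p ∘L fderiv ℝ F x) (ν i x) = stdFrame p i := by
    intro x hx i
    rw [ContinuousLinearMap.comp_apply, (hFN x hx).2 i, tanIncl_single]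
  refine ⟨fun z => ‖h z‖⁻¹ • h z, ?_, ?_, basePt p, stdFrame p, hN, basePt_mem p,
    posOriented_std p, ?_, hpre, fun x hx => ⟨_, hder x hx, hframe x hx⟩⟩
  · intro x hx
    refine ⟨{z | h z ≠ 0}, fun z => ‖h z‖⁻¹ • h z, isOpen_ne_fun hhd.continuous continuous_const,
      hne x hx, ?_, fun _ _ => rfl⟩
    intro z hz
    exact (((hhd.contDiffAt.norm ℝ hz).inv (norm_ne_zero_iff.2 hz)).smul
      hhd.contDiffAt).contDiffWithinAt
  · intro x hx
    have := hne x hx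
    simp [sphereSet, norm_smul, this]
  · intro x hx hxe
    have hxN : x ∈ N := by rw [hpre]; exact ⟨hx, hxe⟩
    refine ⟨_, hder x hxN, fun v hv => ?_⟩
    have hv0 := sphere_tangent p hv
    refine ⟨∑ i, v (Fin.succ i) • ν i x, Submodule.sum_mem _ fun i _ =>
      Submodule.smul_mem _ _ (hN.framing.mem_tangent i x hxN), ?_⟩
    have h1 : (tanIncl p ∘L fderiv ℝ F x) (∑ i, v (Fin.succ i) • ν i x) = v := by
      rw [map_sum]
      simp only [map_smul, hframe x hxN]
      have h2 := tanIncl_apply p (fun i => v i.succ)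
      rw [← h2]
      ext j
      refine Fin.cases ?_ (fun j => ?_) j
      · rw [tanIncl_zero, hv0]
      · rw [tanIncl_succ]
    exact h1

/-- **Statement 16.**  Every compact framed submanifold `(N, ν)` of codimension `p` of a
boundaryless smooth manifold `M` is the Pontryagin manifold `(f⁻¹(y), f^*w)` of some
smooth map `f : M → S^p`, regular value `y`, and positively oriented basis `w` of
`T_y S^p`. -/
theorem framed_submanifold_is_pontryagin (m p : ℕ) (M : Set E)
    (hM : IsSubmanifold M m) (N : Set E) (ν : Fin p → E → E)
    (hN : IsFramedSubmanifold M m N p ν) :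
    ∃ f : E → EuclideanSpace ℝ (Fin (p + 1)),
      SmoothOnSet f M ∧ (∀ x ∈ M, f x ∈ sphereSet p) ∧
      ∃ y w, IsPontryaginManifold m p f M y w N ν := by
  rcases N.eq_empty_or_nonempty with rfl | hne
  · have hb : ¬ (-basePt p = basePt p) := by
      intro h
      have h1 := congrArg (fun q : EuclideanSpace ℝ (Fin (p + 1)) => q 0) h
      simp [basePt] at h1
      norm_num at h1
    refine ⟨fun _ => -basePt p, fun x _ => ⟨univ, fun _ => -basePt p, isOpen_univ, mem_univ _,
      contDiffOn_const, fun _ _ => rfl⟩, fun x _ => by simp [sphereSet, norm_basePt],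
      basePt p, stdFrame p, hN, basePt_mem p, posOriented_std p,
      fun x _ h => (hb h).elim, ?_, fun x hx => hx.elim⟩
    ext x
    simp [hb]
  · have := finiteDimensional_of_nonempty hN.submanifold hN.compact hne
    exact pontryagin_finite m p M hM N ν hN

end Paper
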